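/- arXiv:2605.17167 — 5 statements merged into one kernel-verified Lean document; each statement's English description precedes it below -/
import Mathlib

section
/- Let ρ and σ be n×n positive definite complex density matrices. Then F_{1/2}^spec(ρ,σ) = Tr √(ρ^{1/2} σ ρ^{1/2}), i.e. at the midpoint t = 1/2 the weighted spectral fidelity equals the Uhlmann (root) fidelity. -/
/-!
Write `S = ρ^{1/2}`. Both `(ρ⁻¹)^{1/2}` and `S⁻¹` are positive semidefinite square roots of `ρ⁻¹`,
so uniqueness of the square root makes them equal, and hence `(ρ⁻¹)^{-1/2} = S`. With
`X = (S σ S)^{1/2}` this gives `ρ⁻¹ ♯ σ = S⁻¹ X S⁻¹`. At `t = 1/2` the outer exponent is `1`, so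
the spectral fidelity is `Tr (S S S⁻¹ X S⁻¹) = Tr (S X S⁻¹) = Tr X` by cyclicity of the trace.
-/

open Matrix
open scoped ComplexOrder

/-- Real power of a matrix by functional calculus on the eigenvalues
(junk value `0` if the matrix is not Hermitian).  Since eigenvalue powers
are real powers (`Real.rpow`) of real numbers, the conventions `0 ^ 0 = 1`
and `0 ^ s = 0` for `s > 0` hold on positive semidefinite matrices. -/
noncomputable def mpow {n : Type*} [Fintype n] [DecidableEq n]
    (A : Matrix n n ℂ) (r : ℝ) : Matrix n n ℂ :=
  if hA : A.IsHermitian then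
    (hA.eigenvectorUnitary : Matrix n n ℂ) *
      Matrix.diagonal (fun i => ((hA.eigenvalues i ^ r : ℝ) : ℂ)) *
      (star (hA.eigenvectorUnitary : Matrix n n ℂ))
  else 0

/-- The matrix geometric mean `A ♯ B = A^{1/2} (A^{-1/2} B A^{-1/2})^{1/2} A^{1/2}`. -/
noncomputable def msharp {n : Type*} [Fintype n] [DecidableEq n]
    (A B : Matrix n n ℂ) : Matrix n n ℂ :=
  mpow A (1/2) * mpow (mpow A (-(1/2)) * B * mpow A (-(1/2))) (1/2) * mpow A (1/2)

/-- The weighted spectral fidelity `F_t^spec(ρ,σ) = Tr(ρ (ρ⁻¹ ♯ σ)^{2t})`. -/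
noncomputable def specFid {n : Type*} [Fintype n] [DecidableEq n]
    (t : ℝ) (ρ σ : Matrix n n ℂ) : ℂ :=
  Matrix.trace (ρ * mpow (msharp ρ⁻¹ σ) (2 * t))

section
variable {n : Type*} [Fintype n] [DecidableEq n]

lemma mpow_posSemidef {A : Matrix n n ℂ} (hA : A.PosSemidef) (r : ℝ) : (mpow A r).PosSemidef := by
  rw [mpow, dif_pos hA.isHermitian]
  refine PosSemidef.mul_mul_conjTranspose_same (PosSemidef.diagonal fun i => ?_) _
  exact Complex.zero_le_real.2 (Real.rpow_nonneg (hA.eigenvalues_nonneg i) r)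

lemma mpow_one {A : Matrix n n ℂ} (hA : A.IsHermitian) : mpow A 1 = A := by
  rw [mpow, dif_pos hA]
  conv_rhs => rw [hA.spectral_theorem]
  simp [Unitary.conjStarAlgAut_apply, Function.comp_def]

lemma mpow_zero {A : Matrix n n ℂ} (hA : A.IsHermitian) : mpow A 0 = 1 := by
  rw [mpow, dif_pos hA]
  simp

/-- Positive definiteness is needed: at an eigenvalue `0` the law `x ^ (r + s) = x ^ r * x ^ s`
fails, for instance for `r = 1` and `s = -1`. -/
lemma mpow_mul_mpow {A : Matrix n n ℂ} (hA : A.PosDef) (r s : ℝ) :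
    mpow A r * mpow A s = mpow A (r + s) := by
  have hH := hA.isHermitian
  have hU : star (hH.eigenvectorUnitary : Matrix n n ℂ) * (hH.eigenvectorUnitary : Matrix n n ℂ)
      = 1 := by simp
  have hD : diagonal (fun i => ((hH.eigenvalues i ^ (r + s) : ℝ) : ℂ)) =
      diagonal (fun i => ((hH.eigenvalues i ^ r : ℝ) : ℂ)) *
        diagonal (fun i => ((hH.eigenvalues i ^ s : ℝ) : ℂ)) := by
    simp only [diagonal_mul_diagonal, Real.rpow_add (hA.eigenvalues_pos _), Complex.ofReal_mul]
  simp only [mpow, dif_pos hH]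
  rw [hD]
  simp only [Matrix.mul_assoc]
  rw [← Matrix.mul_assoc (star _) (hH.eigenvectorUnitary : Matrix n n ℂ), hU, Matrix.one_mul]

lemma mpow_half_mul_self {A : Matrix n n ℂ} (hA : A.PosDef) :
    mpow A (1 / 2) * mpow A (1 / 2) = A := by
  rw [mpow_mul_mpow hA, add_halves, mpow_one hA.isHermitian]

open scoped MatrixOrder Matrix.Norms.L2Operator in
lemma posSemidef_sqrt_unique {A B : Matrix n n ℂ} (hA : A.PosSemidef) (hB : B.PosSemidef)
    (h : A * A = B * B) : A = B :=
  (CFC.mul_self_eq_mul_self_iff A B hA.nonneg hB.nonneg).1 h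

lemma mpow_inv_half {A : Matrix n n ℂ} (hA : A.PosDef) :
    mpow A⁻¹ (1 / 2) = (mpow A (1 / 2))⁻¹ := by
  refine posSemidef_sqrt_unique (mpow_posSemidef hA.inv.posSemidef _)
    (mpow_posSemidef hA.posSemidef _).inv ?_
  rw [mpow_half_mul_self hA.inv, ← Matrix.mul_inv_rev, mpow_half_mul_self hA]

end

/-- At the midpoint `t = 1/2` the weighted spectral fidelity equals the
Uhlmann (root) fidelity `Tr √(ρ^{1/2} σ ρ^{1/2})`. -/
theorem specFid_half_eq_uhlmann {n : Type*} [Fintype n] [DecidableEq n]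
    (ρ σ : Matrix n n ℂ) (hρ : ρ.PosDef) (hσ : σ.PosDef)
    (hρ1 : ρ.trace = 1) (hσ1 : σ.trace = 1) :
    specFid (1/2) ρ σ =
      Matrix.trace (mpow (mpow ρ (1/2) * σ * mpow ρ (1/2)) (1/2)) := by
  have hP := mpow_inv_half hρ
  have hPQ : mpow ρ⁻¹ (1 / 2) * mpow ρ⁻¹ (-(1 / 2)) = 1 := by
    rw [mpow_mul_mpow hρ.inv, add_neg_cancel, mpow_zero hρ.inv.isHermitian]
  have hSS := mpow_half_mul_self hρ
  have hS := mpow_posSemidef hρ.posSemidef (1 / 2)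
  set S := mpow ρ (1 / 2) with hS_def
  have hdet : IsUnit S.det := by
    have h : IsUnit (S * S).det := by
      rw [hSS]
      exact (Matrix.isUnit_iff_isUnit_det ρ).1 hρ.isUnit
    rw [Matrix.det_mul] at h
    exact isUnit_of_mul_isUnit_left h
  have hQ : mpow ρ⁻¹ (-(1 / 2)) = S := by
    rw [hP] at hPQ
    calc mpow ρ⁻¹ (-(1 / 2)) = S * (S⁻¹ * mpow ρ⁻¹ (-(1 / 2))) := by
          rw [← Matrix.mul_assoc, Matrix.mul_nonsing_inv S hdet, Matrix.one_mul]
      _ = S := by rw [hPQ, Matrix.mul_one]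
  have hX : (mpow (S * σ * S) (1 / 2)).PosSemidef := by
    refine mpow_posSemidef ?_ _
    have h := hσ.posSemidef.mul_mul_conjTranspose_same S
    rwa [hS.isHermitian.eq] at h
  rw [specFid, msharp, hP, hQ]
  set X := mpow (S * σ * S) (1 / 2)
  have hM : (S⁻¹ * X * S⁻¹).IsHermitian := by
    have h := (hX.mul_mul_conjTranspose_same S⁻¹).isHermitian
    rwa [hS.inv.isHermitian.eq] at h
  rw [mul_one_div_cancel two_ne_zero, mpow_one hM, ← hSS]
  calc (S * S * (S⁻¹ * X * S⁻¹)).trace = (S * (S * S⁻¹) * X * S⁻¹).trace := by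
        simp only [Matrix.mul_assoc]
    _ = (S⁻¹ * (S * X)).trace := by
        rw [Matrix.mul_nonsing_inv S hdet, Matrix.mul_one, Matrix.trace_mul_comm]
    _ = X.trace := by
        rw [← Matrix.mul_assoc, Matrix.nonsing_inv_mul S hdet, Matrix.one_mul]
end

section
/- Let ρ and σ be n×n positive definite complex density matrices. Then the map t ↦ F_t^spec(ρ,σ) is convex on the interval [0,1]. -/
/-! Write `G = ρ⁻¹ ♯ σ`, which is positive definite, and diagonalize it as `U diag(λ) U*`. Then
`Tr(ρ G ^ (2t)) = ∑ i, (U* ρ U) i i * λ i ^ (2t)`. The weights `(U* ρ U) i i` are nonnegative because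
`ρ` is positive, and each `t ↦ λ i ^ (2t)` is an exponential function of `t` because `λ i > 0`, so
the sum is convex. -/

open Matrix
open scoped ComplexOrder

theorem mpow_posDef {n : Type*} [Fintype n] [DecidableEq n]
    {A : Matrix n n ℂ} (hA : A.PosDef) (r : ℝ) : (mpow A r).PosDef := by
  rw [mpow, dif_pos hA.isHermitian]
  refine (Matrix.IsUnit.posDef_star_right_conjugate_iff
    (Unitary.isUnit_coe (U := hA.isHermitian.eigenvectorUnitary))).2 ?_
  refine Matrix.PosDef.diagonal fun i => ?_
  exact_mod_cast Real.rpow_pos_of_pos (hA.eigenvalues_pos i) r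

theorem posDef_conj_mpow {n : Type*} [Fintype n] [DecidableEq n]
    {A B : Matrix n n ℂ} (hA : A.PosDef) (hB : B.PosDef) (r : ℝ) :
    (mpow A r * B * mpow A r).PosDef := by
  have hP := mpow_posDef hA r
  have h := (Matrix.IsUnit.posDef_star_right_conjugate_iff hP.isUnit (x := B)).2 hB
  rwa [Matrix.star_eq_conjTranspose, hP.isHermitian.eq] at h

theorem msharp_posDef {n : Type*} [Fintype n] [DecidableEq n]
    {A B : Matrix n n ℂ} (hA : A.PosDef) (hB : B.PosDef) : (msharp A B).PosDef :=
  posDef_conj_mpow hA (mpow_posDef (posDef_conj_mpow hA hB _) _) _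

theorem re_trace_mul_mpow {n : Type*} [Fintype n] [DecidableEq n]
    (R : Matrix n n ℂ) {G : Matrix n n ℂ} (hG : G.IsHermitian) (r : ℝ) :
    (Matrix.trace (R * mpow G r)).re =
      ∑ i, ((star (hG.eigenvectorUnitary : Matrix n n ℂ) * R *
        (hG.eigenvectorUnitary : Matrix n n ℂ)) i i).re * hG.eigenvalues i ^ r := by
  rw [mpow, dif_pos hG, ← Matrix.mul_assoc, Matrix.trace_mul_comm, ← Matrix.mul_assoc,
    ← Matrix.mul_assoc, Matrix.trace, Complex.re_sum]
  refine Finset.sum_congr rfl fun i _ => ?_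
  rw [Matrix.diag_apply, Matrix.mul_diagonal, Complex.re_mul_ofReal]

/-- The map `t ↦ F_t^spec(ρ,σ)` is convex on `[0,1]`. -/
theorem specFid_convexOn {n : Type*} [Fintype n] [DecidableEq n]
    (ρ σ : Matrix n n ℂ) (hρ : ρ.PosDef) (hσ : σ.PosDef)
    (hρ1 : ρ.trace = 1) (hσ1 : σ.trace = 1) :
    ConvexOn ℝ (Set.Icc (0 : ℝ) 1) (fun t : ℝ => (specFid t ρ σ).re) := by
  have hG := msharp_posDef hρ.inv hσ
  simp only [specFid, re_trace_mul_mpow ρ hG.isHermitian]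
  have hw := hρ.posSemidef.conjTranspose_mul_mul_same
    (hG.isHermitian.eigenvectorUnitary : Matrix n n ℂ)
  refine ⟨convex_Icc 0 1, fun s _ t _ a b ha hb hab => ?_⟩
  simp only [smul_eq_mul, Finset.mul_sum, ← Finset.sum_add_distrib]
  refine Finset.sum_le_sum fun i _ => ?_
  have hc := (Complex.le_def.1 (hw.diag_nonneg (i := i))).1
  have hl := hG.eigenvalues_pos i
  have he := (convexOn_rpow_left hl).2 (Set.mem_univ (2 * s)) (Set.mem_univ (2 * t)) ha hb hab
  simp only [smul_eq_mul] at he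
  rw [show a * (2 * s) + b * (2 * t) = 2 * (a * s + b * t) by ring] at he
  exact (mul_le_mul_of_nonneg_left he hc).trans_eq (by
    rw [Matrix.star_eq_conjTranspose]; ring)
end

section
/- Let ρ and σ be n×n positive definite complex density matrices that commute (ρσ = σρ), and let t ∈ [0,1]. Then F_t^spec(ρ,σ) = Tr(ρ^{1-t} σ^{t}). -/
/-!
Write the commuting matrices as `ρ = exp X`, `σ = exp Y` with `X`, `Y` Hermitian and commuting
(`exists_commuting_log`). On exponentials of Hermitian matrices the power `mpow · r` is
multiplication of the exponent by `r` (`mpow_exp`), and products of exponentials of commuting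
matrices add exponents. Hence `ρ⁻¹ ♯ σ = exp ((Y - X) / 2)`, and both sides of the identity are
the trace of `exp ((1 - t) X + t Y)`.
-/

open Matrix
open scoped ComplexOrder

open NormedSpace (exp)

/-- If a matrix intertwines two real diagonal matrices, it also intertwines their images under
any function: the `(i, j)` entry of the intertwiner vanishes unless the two diagonal values
agree. -/
lemma diagonal_intertwine {n : Type*} [Fintype n] [DecidableEq n] {a b : n → ℝ}
    {W : Matrix n n ℂ}
    (h : diagonal (fun i => (a i : ℂ)) * W = W * diagonal (fun i => (b i : ℂ))) (f : ℝ → ℝ) :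
    diagonal (fun i => (f (a i) : ℂ)) * W = W * diagonal (fun i => (f (b i) : ℂ)) := by
  ext i j
  have hij := congrFun (congrFun h i) j
  rw [diagonal_mul, mul_diagonal, mul_comm] at hij ⊢
  rcases eq_or_ne (W i j) 0 with h0 | h0
  · simp [h0]
  · have : a i = b j := by exact_mod_cast mul_left_cancel₀ h0 hij
    rw [this]

/-- The spectral decomposition with the unitary and its adjoint as plain matrices. -/
lemma spectral_decomp {n : Type*} [Fintype n] [DecidableEq n] {A : Matrix n n ℂ}
    (hA : A.IsHermitian) :
    A = (hA.eigenvectorUnitary : Matrix n n ℂ) * diagonal (fun i => (hA.eigenvalues i : ℂ)) *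
      star (hA.eigenvectorUnitary : Matrix n n ℂ) := by
  have h := hA.spectral_theorem
  rw [Unitary.conjStarAlgAut_apply] at h
  exact h

/-- Any unitary diagonalization computes `mpow`, not only the one chosen in its definition. -/
lemma mpow_conj {n : Type*} [Fintype n] [DecidableEq n] (U : Matrix n n ℂ)
    (hU : U * star U = 1) (d : n → ℝ) (r : ℝ) :
    mpow (U * diagonal (fun i => (d i : ℂ)) * star U) r =
      U * diagonal (fun i => ((d i ^ r : ℝ) : ℂ)) * star U := by
  have hU' : star U * U = 1 := mul_eq_one_comm.mp hU
  have hA : (U * diagonal (fun i => (d i : ℂ)) * star U).IsHermitian := by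
    apply isHermitian_mul_mul_conjTranspose
    rw [isHermitian_diagonal_iff]
    intro i
    simp [IsSelfAdjoint]
  have hs := spectral_decomp hA
  rw [mpow, dif_pos hA]
  have hV := mul_eq_one_comm.mp (Unitary.coe_star_mul_self hA.eigenvectorUnitary)
  have hV' := Unitary.coe_star_mul_self hA.eigenvectorUnitary
  generalize (hA.eigenvectorUnitary : Matrix n n ℂ) = V at *
  have key : diagonal (fun i => (hA.eigenvalues i : ℂ)) * (star V * U) =
      (star V * U) * diagonal (fun i => (d i : ℂ)) := by
    have := congrArg (fun M => star V * M * U) hs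
    calc _ = (star V * V) * diagonal (fun i => (hA.eigenvalues i : ℂ)) * (star V * U) := by
          rw [hV', one_mul]
      _ = star V * (V * diagonal (fun i => (hA.eigenvalues i : ℂ)) * star V) * U := by
          simp only [mul_assoc]
      _ = star V * (U * diagonal (fun i => (d i : ℂ)) * star U) * U := this.symm
      _ = (star V * U) * diagonal (fun i => (d i : ℂ)) * (star U * U) := by
          simp only [mul_assoc]
      _ = _ := by rw [hU', mul_one]
  have key' := diagonal_intertwine key (fun x => x ^ r)
  calc _ = V * diagonal (fun i => ((hA.eigenvalues i ^ r : ℝ) : ℂ)) * star V * (U * star U) := by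
        rw [hU, mul_one]
    _ = V * (diagonal (fun i => ((hA.eigenvalues i ^ r : ℝ) : ℂ)) * (star V * U)) * star U := by
        simp only [mul_assoc]
    _ = (V * star V) * U * diagonal (fun i => ((d i ^ r : ℝ) : ℂ)) * star U := by
        rw [key']; simp only [mul_assoc]
    _ = _ := by rw [hV, one_mul]

lemma exp_unitary_conj {n : Type*} [Fintype n] [DecidableEq n] (U : Matrix n n ℂ)
    (hU : U * star U = 1) (d : n → ℝ) :
    exp (U * diagonal (fun i => (d i : ℂ)) * star U) =
      U * diagonal (fun i => ((Real.exp (d i) : ℝ) : ℂ)) * star U := by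
  have hinv : U⁻¹ = star U := inv_eq_right_inv hU
  have hu : IsUnit U := IsUnit.of_mul_eq_one _ hU
  rw [← hinv, exp_conj _ _ hu, exp_diagonal]
  congr 3
  ext i
  simp [Complex.exp_eq_exp_ℂ]

lemma mpow_exp {n : Type*} [Fintype n] [DecidableEq n] {X : Matrix n n ℂ}
    (hX : X.IsHermitian) (r : ℝ) : mpow (exp X) r = exp (r • X) := by
  have hs := spectral_decomp hX
  have hV := mul_eq_one_comm.mp (Unitary.coe_star_mul_self hX.eigenvectorUnitary)
  generalize (hX.eigenvectorUnitary : Matrix n n ℂ) = V at *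
  have hr : r • X = V * diagonal (fun i => ((r * hX.eigenvalues i : ℝ) : ℂ)) * star V := by
    conv_lhs => rw [hs]
    rw [← smul_mul_assoc, ← mul_smul_comm, ← diagonal_smul]
    congr 3
    ext i
    simp
  rw [hr, exp_unitary_conj V hV]
  conv_lhs => rw [hs]
  rw [exp_unitary_conj V hV, mpow_conj V hV]
  congr 3
  ext i
  rw [← Real.exp_mul, mul_comm]

/-- A positive definite matrix has a Hermitian logarithm commuting with everything that commutes
with the matrix. -/
lemma exists_log {n : Type*} [Fintype n] [DecidableEq n] {A : Matrix n n ℂ} (hA : A.PosDef) :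
    ∃ X : Matrix n n ℂ, X.IsHermitian ∧ exp X = A ∧ ∀ B, Commute A B → Commute X B := by
  have hpos := hA.eigenvalues_pos
  have hs := spectral_decomp hA.1
  have hV := mul_eq_one_comm.mp (Unitary.coe_star_mul_self hA.1.eigenvectorUnitary)
  have hV' := Unitary.coe_star_mul_self hA.1.eigenvectorUnitary
  generalize (hA.1.eigenvectorUnitary : Matrix n n ℂ) = V at *
  generalize hA.1.eigenvalues = d at *
  refine ⟨V * diagonal (fun i => ((Real.log (d i) : ℝ) : ℂ)) * star V, ?_, ?_, ?_⟩
  · apply isHermitian_mul_mul_conjTranspose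
    rw [isHermitian_diagonal_iff]
    intro i
    simp [IsSelfAdjoint]
  · rw [exp_unitary_conj V hV, hs]
    simp only [Real.exp_log (hpos _)]
  · intro B hB
    -- In the eigenbasis of `A`, the matrix `B` intertwines the diagonal of `A` with itself.
    have key : diagonal (fun i => (d i : ℂ)) * (star V * B * V) =
        (star V * B * V) * diagonal (fun i => (d i : ℂ)) := by
      calc _ = (star V * V) * diagonal (fun i => (d i : ℂ)) * (star V * B * V) := by
            rw [hV', one_mul]
        _ = star V * ((V * diagonal (fun i => (d i : ℂ)) * star V) * B) * V := by
            simp only [mul_assoc]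
        _ = star V * (B * (V * diagonal (fun i => (d i : ℂ)) * star V)) * V := by
            rw [← hs, hB.eq]
        _ = (star V * B * V) * diagonal (fun i => (d i : ℂ)) * (star V * V) := by
            simp only [mul_assoc]
        _ = _ := by rw [hV', mul_one]
    have key' := diagonal_intertwine key Real.log
    set D := diagonal (fun i => ((Real.log (d i) : ℝ) : ℂ))
    calc V * D * star V * B = V * D * star V * B * (V * star V) := by rw [hV, mul_one]
      _ = V * (D * (star V * B * V)) * star V := by simp only [mul_assoc]
      _ = (V * star V) * B * (V * D * star V) := by rw [key']; simp only [mul_assoc]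
      _ = B * (V * D * star V) := by rw [hV, one_mul]

lemma exists_commuting_log {n : Type*} [Fintype n] [DecidableEq n] {A B : Matrix n n ℂ}
    (hA : A.PosDef) (hB : B.PosDef) (hAB : Commute A B) :
    ∃ X Y : Matrix n n ℂ, X.IsHermitian ∧ Y.IsHermitian ∧ Commute X Y ∧
      exp X = A ∧ exp Y = B := by
  obtain ⟨X, hX, hXA, hXc⟩ := exists_log hA
  obtain ⟨Y, hY, hYB, hYc⟩ := exists_log hB
  exact ⟨X, Y, hX, hY, (hYc X (hXc B hAB).symm).symm, hXA, hYB⟩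

/-- For a commuting pair of exponents, `exp X ♯ exp Y = exp ((X + Y) / 2)`. -/
lemma msharp_exp {n : Type*} [Fintype n] [DecidableEq n] {X Y : Matrix n n ℂ}
    (hX : X.IsHermitian) (hY : Y.IsHermitian) (h : Commute X Y) :
    msharp (exp X) (exp Y) = exp ((1 / 2 : ℝ) • (X + Y)) := by
  have hXX (a b : ℝ) : Commute (a • X) (b • X) := ((Commute.refl X).smul_left a).smul_right b
  have hXY (a b : ℝ) : Commute (a • X) (b • Y) := (h.smul_left a).smul_right b
  have hXY1 (a : ℝ) : Commute (a • X) Y := h.smul_left a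
  have hin : exp ((-(1 / 2) : ℝ) • X) * exp Y * exp ((-(1 / 2) : ℝ) • X) = exp (Y - X) := by
    rw [← exp_add_of_commute _ _ (hXY1 _),
      ← exp_add_of_commute _ _ ((hXX _ _).add_left (hXY1 _).symm)]
    congr 1
    module
  rw [msharp, mpow_exp hX, mpow_exp hX, hin, mpow_exp (hY.sub hX),
    ← exp_add_of_commute, ← exp_add_of_commute]
  · congr 1
    module
  · rw [smul_sub]
    exact (hXX _ _).add_left ((hXY _ _).symm.sub_left (hXX _ _))
  · rw [smul_sub]
    exact (hXY _ _).sub_right (hXX _ _)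

/-- Classicalization: if `ρ` and `σ` commute then
`F_t^spec(ρ,σ) = Tr(ρ^{1-t} σ^t)`. -/
theorem specFid_of_commute {n : Type*} [Fintype n] [DecidableEq n]
    (ρ σ : Matrix n n ℂ) (hρ : ρ.PosDef) (hσ : σ.PosDef)
    (hρ1 : ρ.trace = 1) (hσ1 : σ.trace = 1)
    (hcomm : ρ * σ = σ * ρ)
    (t : ℝ) (ht : t ∈ Set.Icc (0 : ℝ) 1) :
    specFid t ρ σ = Matrix.trace (mpow ρ (1 - t) * mpow σ t) := by
  obtain ⟨X, Y, hX, hY, h, rfl, rfl⟩ := exists_commuting_log hρ hσ hcomm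
  have hH : ((1 / 2 : ℝ) • (-X + Y)).IsHermitian := by
    rw [IsHermitian, conjTranspose_smul, (hX.neg.add hY).eq]
    simp
  rw [specFid, ← Matrix.exp_neg, msharp_exp hX.neg hY h.neg_left, mpow_exp hH, mpow_exp hX,
    mpow_exp hY, ← exp_add_of_commute, ← exp_add_of_commute]
  · congr 2
    module
  · exact (h.smul_left _).smul_right _
  · exact (((Commute.refl X).neg_right.add_right h).smul_right _).smul_right _
end

section
/- Let ρ and σ be n×n positive definite complex density matrices. Then for all real numbers s < u and all θ ∈ [0,1], F_{(1-θ)s+θu}^spec(ρ,σ) ≤ (F_s^spec(ρ,σ))^{1-θ} · (F_u^spec(ρ,σ))^{θ}; that is, the function t ↦ F_t^spec(ρ,σ) is log-convex on ℝ. -/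
/-!
Let `M = ρ⁻¹ ♯ σ`, with eigenvalues `λ i` and eigenvector unitary `U`. Cyclicity of the trace gives
`F_t = ∑ i, w i * λ i ^ (2 * t)`, where `w i = (U* ρ U) i i ≥ 0` does not depend on `t`
(`trace_mul_mpow_re`). Moreover `M` is positive definite, so every `λ i` is positive (`msharp_posDef`).
Hence `F` is a nonnegative combination of exponentials in `t`, and log-convexity is Hölder's
inequality for weighted sums (`sum_mul_rpow_logConvex`).
-/

open Matrix
open scoped ComplexOrder

/-- Conjugation by a positive definite matrix, written without the adjoint. -/
theorem posDef_conj {n : Type*} [Fintype n] [DecidableEq n]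
    {A B : Matrix n n ℂ} (hA : A.PosDef) (hB : B.PosDef) : (A * B * A).PosDef := by
  have h := (hA.isUnit.posDef_star_right_conjugate_iff (x := B)).2 hB
  rwa [Matrix.star_eq_conjTranspose, hA.isHermitian.eq] at h

/-- `Tr(ρ M^r)` expanded in an orthonormal eigenbasis of `M`; the weights are the diagonal entries
of `ρ` in that basis. -/
theorem trace_mul_mpow_re {n : Type*} [Fintype n] [DecidableEq n]
    (ρ : Matrix n n ℂ) {M : Matrix n n ℂ} (hM : M.IsHermitian) (r : ℝ) :
    (Matrix.trace (ρ * mpow M r)).re =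
      ∑ i, ((star (hM.eigenvectorUnitary : Matrix n n ℂ) * ρ *
        (hM.eigenvectorUnitary : Matrix n n ℂ)) i i).re * hM.eigenvalues i ^ r := by
  rw [mpow, dif_pos hM, ← mul_assoc, Matrix.trace_mul_comm, ← mul_assoc, ← mul_assoc,
    Matrix.trace, Complex.re_sum]
  refine Finset.sum_congr rfl fun i _ => ?_
  rw [Matrix.diag_apply, Matrix.mul_diagonal, Complex.re_mul_ofReal]

theorem sum_mul_rpow_logConvex {ι : Type*} [Fintype ι] (w l : ι → ℝ)
    (hw : ∀ i, 0 ≤ w i) (hl : ∀ i, 0 < l i) (a b θ : ℝ) (h0 : 0 ≤ θ) (h1 : θ ≤ 1) :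
    ∑ i, w i * l i ^ ((1 - θ) * a + θ * b) ≤
      (∑ i, w i * l i ^ a) ^ (1 - θ) * (∑ i, w i * l i ^ b) ^ θ := by
  rcases h0.eq_or_lt with rfl | h0
  · simp
  -- Hölder with weights `w i * l i ^ a`, function `l i ^ (θ * (b - a))` and exponent `1 / θ`.
  have h := Real.inner_le_weight_mul_Lp_of_nonneg Finset.univ (p := θ⁻¹)
    ((one_le_inv₀ h0).2 h1) (fun i => w i * l i ^ a) (fun i => l i ^ (θ * (b - a)))
    (fun i => mul_nonneg (hw i) (Real.rpow_nonneg (hl i).le _))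
    (fun i => Real.rpow_nonneg (hl i).le _)
  rw [inv_inv] at h
  have hmid : ∀ i, w i * l i ^ a * l i ^ (θ * (b - a)) =
      w i * l i ^ ((1 - θ) * a + θ * b) := fun i => by
    rw [mul_assoc, ← Real.rpow_add (hl i)]
    ring_nf
  have hend : ∀ i, w i * l i ^ a * (l i ^ (θ * (b - a))) ^ θ⁻¹ = w i * l i ^ b := fun i => by
    rw [mul_assoc, ← Real.rpow_mul (hl i).le, ← Real.rpow_add (hl i)]
    congr 2
    field_simp
    ring
  simpa only [hmid, hend] using h

/-- Log-convexity in the parameter `t`: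
`F_{(1-θ)s+θu}^spec(ρ,σ) ≤ (F_s^spec(ρ,σ))^{1-θ} (F_u^spec(ρ,σ))^θ`. -/
theorem specFid_logConvex {n : Type*} [Fintype n] [DecidableEq n]
    (ρ σ : Matrix n n ℂ) (hρ : ρ.PosDef) (hσ : σ.PosDef)
    (hρ1 : ρ.trace = 1) (hσ1 : σ.trace = 1) :
    ∀ s u : ℝ, s < u → ∀ θ ∈ Set.Icc (0 : ℝ) 1,
      (specFid ((1 - θ) * s + θ * u) ρ σ).re ≤
        (specFid s ρ σ).re ^ (1 - θ) * (specFid u ρ σ).re ^ θ := by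
  intro s u _ θ hθ
  have hM : (msharp ρ⁻¹ σ).PosDef := msharp_posDef hρ.inv hσ
  simp only [specFid, trace_mul_mpow_re ρ hM.isHermitian]
  rw [show 2 * ((1 - θ) * s + θ * u) = (1 - θ) * (2 * s) + θ * (2 * u) by ring]
  refine sum_mul_rpow_logConvex _ _ (fun i => ?_) hM.eigenvalues_pos _ _ _ hθ.1 hθ.2
  exact (Complex.le_def.1
    ((hρ.posSemidef.conjTranspose_mul_mul_same _).diag_nonneg (i := i))).1
end

section
/- For every t ∈ (0, 1/2) there exists p₀ ∈ (0,1) such that for all p ∈ (0, p₀), (1/2 + √(p(1−p)))^t > 2^{t−1} · (p^t + (1−p)^t). (This real inequality is the core of the demonstration that the data processing inequality fails for the weighted spectral fidelity under the dephasing channel for all t ≠ 1/2.) -/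
/-!
Since `t > 0`, both sides of the inequality are continuous in `p` at `0`, with values `2 ^ (-t)`
on the left and `2 ^ (t - 1)` on the right. As `t < 1/2` gives `t - 1 < -t`, the inequality is
strict at `p = 0`, hence it persists on a neighbourhood of `0`.
-/

open Matrix
open scoped ComplexOrder

/-- The core real inequality behind the failure of the data processing
inequality: for every `t ∈ (0, 1/2)` there is `p₀ ∈ (0,1)` such that for
all `p ∈ (0, p₀)`,
`(1/2 + √(p(1-p)))^t > 2^{t-1} (p^t + (1-p)^t)`. -/
theorem dpi_core_inequality :
    ∀ t ∈ Set.Ioo (0 : ℝ) (1/2),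
      ∃ p₀ ∈ Set.Ioo (0 : ℝ) 1, ∀ p ∈ Set.Ioo (0 : ℝ) p₀,
        (1/2 + Real.sqrt (p * (1 - p))) ^ t >
          (2 : ℝ) ^ (t - 1) * (p ^ t + (1 - p) ^ t) := by
  rintro t ⟨ht0, ht⟩
  have hL : ContinuousAt (fun p : ℝ => (1/2 + Real.sqrt (p * (1 - p))) ^ t) 0 :=
    ContinuousAt.rpow_const (by fun_prop) (Or.inr ht0.le)
  have hR : ContinuousAt (fun p : ℝ => (2 : ℝ) ^ (t - 1) * (p ^ t + (1 - p) ^ t)) 0 :=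
    continuousAt_const.mul
      ((ContinuousAt.rpow_const continuousAt_id (Or.inr ht0.le)).add
        (ContinuousAt.rpow_const (by fun_prop) (Or.inr ht0.le)))
  have h0 : (2 : ℝ) ^ (t - 1) * ((0 : ℝ) ^ t + (1 - 0) ^ t) <
      (1/2 + Real.sqrt (0 * (1 - 0))) ^ t := by
    have hhalf : (1/2 : ℝ) ^ t = 2 ^ (-t) := by
      rw [one_div, Real.inv_rpow (by norm_num), Real.rpow_neg (by norm_num)]
    rw [Real.zero_rpow ht0.ne', sub_zero, Real.one_rpow, zero_mul, Real.sqrt_zero, add_zero,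
      zero_add, mul_one, hhalf]
    exact Real.rpow_lt_rpow_of_exponent_lt (by norm_num) (by linarith)
  obtain ⟨ε, hε, h⟩ := Metric.eventually_nhds_iff.1 (hR.eventually_lt hL h0)
  refine ⟨min ε (1/2), ⟨by positivity, (min_le_right _ _).trans_lt (by norm_num)⟩, ?_⟩
  rintro p ⟨hp0, hp⟩
  apply h
  rw [Real.dist_eq, sub_zero, abs_of_pos hp0]
  exact hp.trans_le (min_le_left _ _)
end
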